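/- Let F_16 = F_2[X]/(X⁴+X+1) and let α be the class of X (a primitive element of F_16). A triple (H_2, H_1, H_0) of row vectors in F_16^{1×2} defines a (2,1,2) complete MDP convolutional code (i.e. h_1 and h_2 are coprime in F_16[z] and the complete 4-MDP minor condition holds) if and only if there exist β, γ ∈ F_16 \ {0}, i_1 ∈ {0,…,14}, k ∈ {1, 2, 4, 8} and j ∈ {0, 1} such that H_2 = [β, γ], H_1 = [β α^{i_1}, γ α^{i_2}], H_0 = [β α^{i_3}, γ α^{i_3}], where i_2 ≡ i_1 + 3k (mod 15) and i_3 ≡ i_1 + i_2 − 4^j k (mod 15). Consequently, there are exactly 15² · 120 = 27000 such triples with all six entries nonzero. -/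

import Mathlib

/-!
Rescaling `h_1`, `h_2` and the variable `z` multiplies rows and columns of the parity-check matrix
by nonzero factors (`good_scale`). As the minor condition forces `h_{1,2}`, `h_{2,2}` and `h_{1,1}`
to be nonzero (`Good.ne_zero`), it suffices to treat `h_1 = b + z + z²`, `h_2 = d + c z + z²`.

The four conjugates `α^m`, `m ∈ {1, 2, 4, 8}`, are roots of the same polynomial `X⁴ + X + 1`
(`root_pow`). Expressing everything through a suitable conjugate, one may take `b` to be zero or one
of `1, α², α³, α⁵, α¹⁴`, which represent the Frobenius orbits of nonzero elements
(`exists_orbit_rep`). The remaining finite problem is computed with field elements coded as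
four-bit numbers (`val`, `gmul`) and minors obtained by Laplace expansion (`lap`, `val_lap`): all
admissible minors are nonzero for `(b, c, d) = (α², α³, α²)` and `(α¹⁴, α³, α¹⁴)` (`checkAll_four`,
`checkAll_nine`), and for every other triple with such a `b` some admissible minor vanishes
(`checkTests_eq`). This gives `good_normalized_iff`; undoing the normalization yields the
exponents of the theorem, since `2 m = 3 m - m` and `14 m ≡ 3 m - 4 m` modulo `15`.

Coprimality is automatic: after normalization `h_1` and `h_2` have the same nonzero constant term
and different linear coefficients, so they have no common factor (`coprime_hpoly`).
The count holds because the parameters are determined by the code (`params_unique`), so that there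
are `15 · 15 · 15 · 4 · 2` codes.
-/

open Polynomial

/-- The partial parity-check matrix `𝔥_j` built from coefficient matrices
`H_0, …, H_ν ∈ R^{(n-k)×n}`: the block in block-row `r ∈ {0,…,j}` and block-column
`c ∈ {0,…,ν+j}` is `H_{ν+r-c}` if `r ≤ c ≤ ν + r` and the zero matrix otherwise. -/
def pcm {R : Type*} [CommRing R] (n k ν : ℕ) (hn : 0 < n) (hnk : k < n)
    (H : Fin (ν + 1) → Matrix (Fin (n - k)) (Fin n) R) (j : ℕ) :
    Matrix (Fin ((j + 1) * (n - k))) (Fin ((ν + j + 1) * n)) R :=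
  fun p q =>
    if h : (p : ℕ) / (n - k) ≤ (q : ℕ) / n ∧ (q : ℕ) / n ≤ ν + (p : ℕ) / (n - k) then
      H ⟨ν + (p : ℕ) / (n - k) - (q : ℕ) / n, by omega⟩
        ⟨(p : ℕ) % (n - k), Nat.mod_lt _ (by omega)⟩
        ⟨(q : ℕ) % n, Nat.mod_lt _ hn⟩
    else 0

/-- A (0-based) strictly increasing choice `js` of `(j+1)(n-k)` columns of `𝔥_j` is
admissible if (with 1-based indices) `j_{(n-k)s+1} > sn` and `j_{(n-k)s} ≤ sn + νn`
for all `s = 1, …, j`. -/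
def Admissible (n k ν j : ℕ) (js : Fin ((j + 1) * (n - k)) → Fin ((ν + j + 1) * n)) : Prop :=
  StrictMono js ∧
  ∀ s : ℕ, 1 ≤ s → s ≤ j →
    ∀ (h1 : (n - k) * s < (j + 1) * (n - k)) (h2 : (n - k) * s - 1 < (j + 1) * (n - k)),
      s * n ≤ (js ⟨(n - k) * s, h1⟩ : ℕ) ∧
      (js ⟨(n - k) * s - 1, h2⟩ : ℕ) < s * n + ν * n

/-- The complete `j`-MDP minor condition: every full size minor of `𝔥_j` formed by an
admissible choice of columns is nonzero. -/
def CompleteJMDP {F : Type*} [Field F] (n k ν : ℕ) (hn : 0 < n) (hnk : k < n)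
    (H : Fin (ν + 1) → Matrix (Fin (n - k)) (Fin n) F) (j : ℕ) : Prop :=
  ∀ js : Fin ((j + 1) * (n - k)) → Fin ((ν + j + 1) * n), Admissible n k ν j js →
    ((pcm n k ν hn hnk H j).submatrix id js).det ≠ 0

/-- `hpoly c0 c1 c2 = c0 + c1·z + c2·z²`. -/
noncomputable def hpoly {F : Type*} [Field F] (c0 c1 c2 : F) : Polynomial F :=
  C c0 + C c1 * X + C c2 * X ^ 2

/-- The triple `(H_0, H_1, H_2)` of `1 × 2` coefficient matrices `H_i = [h_{1,i}, h_{2,i}]`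
(parameters `n = 2`, `k = 1`, `ν = 2`). -/
def Htriple {F : Type*} [Field F] (h10 h11 h12 h20 h21 h22 : F) :
    Fin (2 + 1) → Matrix (Fin (2 - 1)) (Fin 2) F :=
  ![Matrix.of fun _ c => ![h10, h20] c,
    Matrix.of fun _ c => ![h11, h21] c,
    Matrix.of fun _ c => ![h12, h22] c]

/-- `(H_2, H_1, H_0)` defines a `(2,1,2)` complete `j`-MDP convolutional code:
`h_1(z) = h_{1,0} + h_{1,1}z + h_{1,2}z²` and `h_2(z) = h_{2,0} + h_{2,1}z + h_{2,2}z²`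
are coprime in `F[z]` (equivalently, `H(z) = [h_1(z) h_2(z)]` is left prime) and the
complete `j`-MDP minor condition holds. -/
def Is212 {F : Type*} [Field F] (j : ℕ) (h10 h11 h12 h20 h21 h22 : F) : Prop :=
  IsCoprime (hpoly h10 h11 h12) (hpoly h20 h21 h22) ∧
  CompleteJMDP 2 1 2 (by norm_num) (by norm_num) (Htriple h10 h11 h12 h20 h21 h22) j


/-! ### Bit-coded arithmetic in the field with 16 elements -/

/-- The value at `α` of the polynomial over `F_2` of degree at most `3` whose coefficients are
the four lowest binary digits of `n`. For a root `α` of `X⁴ + X + 1` the numbers below `16` code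
the elements of the field in this way. -/
def val {F : Type*} [Field F] (α : F) (n : ℕ) : F :=
  ((n.testBit 0).toNat : F) + (n.testBit 1).toNat * α + (n.testBit 2).toNat * α ^ 2 +
    (n.testBit 3).toNat * α ^ 3

/-- Multiplication table of `F_2[X]/(X⁴+X+1)` in the coding of `val`: written in base `16`, the
digit with place value `16 ^ (16 a + b)` is the code of the product of `a` and `b`. -/
def mulTable : ℕ :=
  116196760129267793630862849262464326346044543732748708940920453221664288556434379745879494961270582141731748813355742142288220638766218855867759359510984593843506004200114943278699875244065120512813025380665946106619127097398772031257643617143689515450995722003729973585221105779229319991106539050771048038400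

/-- Product of codes. Each argument of the table lookup occurs once and a zero left factor
discards the right one unevaluated, which keeps evaluation of Laplace expansions cheap. The raw
`Nat` operations are the ones the kernel evaluates directly. -/
def gmul (a b : ℕ) : ℕ :=
  bif Nat.beq (Nat.mod a 16) 0 then 0
  else Nat.mod (Nat.shiftRight mulTable
    (Nat.add (Nat.mul 64 (Nat.mod a 16)) (Nat.mul 4 (Nat.mod b 16)))) 16

/-- Multiplication by `α` on codes. -/
def xtime (a : ℕ) : ℕ := ((2 * a) ^^^ (bif a.testBit 3 then 19 else 0)) % 16

section Val

variable {F : Type*} [Field F] {α : F}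

theorem val_zero : val α 0 = 0 := by simp [val]

theorem val_one : val α 1 = 1 := by simp [val, Nat.testBit]

theorem val_mod (a : ℕ) : val α (a % 16) = val α a := by
  have h : ∀ i < 4, (a % 16).testBit i = a.testBit i := by
    intro i hi
    rw [show 16 = 2 ^ 4 by norm_num, Nat.testBit_mod_two_pow]
    simp [hi]
  simp only [val]
  rw [h 0 (by norm_num), h 1 (by norm_num), h 2 (by norm_num), h 3 (by norm_num)]

variable [CharP F 2]

theorem val_xor (a b : ℕ) : val α (a ^^^ b) = val α a + val α b := by
  have key : ∀ x y : Bool, (((x ^^ y).toNat : ℕ) : F) = x.toNat + y.toNat := by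
    intro x y
    cases x <;> cases y <;> simp [CharTwo.add_self_eq_zero]
  simp only [val, Nat.testBit_xor, key]
  ring

theorem val_xtime (hα : α ^ 4 + α + 1 = 0) (a : ℕ) (ha : a < 16) :
    val α (xtime a) = α * val α a := by
  have h4 : α ^ 4 = α + 1 := by
    linear_combination hα - (α + 1) * CharTwo.two_eq_zero (R := F)
  interval_cases a <;> simp [val, xtime, Nat.testBit] <;>
    first
    | done
    | ring1
    | linear_combination -h4
    | linear_combination -h4 - α * CharTwo.two_eq_zero (R := F)

theorem gmul_eq : ∀ a < 16, ∀ b < 16, gmul a b =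
    (bif b.testBit 0 then a else 0) ^^^ (bif b.testBit 1 then xtime a else 0) ^^^
    (bif b.testBit 2 then xtime (xtime a) else 0) ^^^
    (bif b.testBit 3 then xtime (xtime (xtime a)) else 0) := by
  decide +kernel

theorem gmul_mod (a b : ℕ) : gmul (a % 16) (b % 16) = gmul a b := by
  have h : ∀ n : ℕ, Nat.mod (n % 16) 16 = Nat.mod n 16 := fun n => Nat.mod_mod n 16
  simp only [gmul, h]

theorem val_gmul (hα : α ^ 4 + α + 1 = 0) (a b : ℕ) :
    val α (gmul a b) = val α a * val α b := by
  rw [← gmul_mod, ← val_mod a, ← val_mod b]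
  have ha : a % 16 < 16 := Nat.mod_lt _ (by norm_num)
  have hb : b % 16 < 16 := Nat.mod_lt _ (by norm_num)
  generalize a % 16 = a at *
  generalize b % 16 = b at *
  have hx : ∀ a, xtime a < 16 := fun a => Nat.mod_lt _ (by norm_num)
  have hc : ∀ (x : Bool) (n : ℕ), val α (bif x then n else 0) = x.toNat * val α n := by
    intro x n
    cases x <;> simp [val_zero]
  rw [gmul_eq a ha b hb]
  simp only [val_xor, hc]
  rw [val_xtime hα (xtime (xtime a)) (hx _), val_xtime hα (xtime a) (hx _), val_xtime hα a ha]
  conv_rhs => rw [mul_comm, val]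
  ring

/-- Codes of nonzero elements are invertible, hence do not evaluate to zero. -/
theorem val_ne_zero (hα : α ^ 4 + α + 1 = 0) {n : ℕ} (hn : n < 16) (h0 : n ≠ 0) :
    val α n ≠ 0 := by
  have key : ∀ n < 16, n ≠ 0 → ∃ m < 16, gmul n m = 1 := by decide +kernel
  obtain ⟨m, -, hm⟩ := key n hn h0
  intro h
  have := val_gmul hα n m
  rw [hm, h, val_one, zero_mul] at this
  exact one_ne_zero this

theorem val_injOn (hα : α ^ 4 + α + 1 = 0) {m n : ℕ} (hm : m < 16) (hn : n < 16)
    (h : val α m = val α n) : m = n := by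
  by_contra hne
  have h1 : m ^^^ n < 2 ^ 4 := Nat.xor_lt_two_pow hm hn
  have h2 : m ^^^ n ≠ 0 := fun h => hne (by simpa using h)
  apply val_ne_zero hα h1 h2
  rw [val_xor, h, CharTwo.add_self_eq_zero]

theorem exists_val [Fintype F] (hF : Fintype.card F = 16) (hα : α ^ 4 + α + 1 = 0) (x : F) :
    ∃ n < 16, val α n = x := by
  have hb : Function.Bijective (fun n : Fin 16 => val α n) := by
    rw [Fintype.bijective_iff_injective_and_card]
    exact ⟨fun m n h => Fin.ext (val_injOn hα m.2 n.2 h), by simp [hF]⟩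
  obtain ⟨n, hn⟩ := hb.2 x
  exact ⟨n, n.2, hn⟩

/-- The codes of `1, α, …, α¹⁴`. -/
def pows : List ℕ := [1, 2, 4, 8, 3, 6, 12, 11, 5, 10, 7, 14, 15, 13, 9]

theorem val_pows (hα : α ^ 4 + α + 1 = 0) : ∀ i < 15, val α (pows.getD i 0) = α ^ i := by
  have h2 : val α 2 = α := by simp [val, Nat.testBit]
  have hstep : ∀ i < 14, pows.getD (i + 1) 0 = gmul 2 (pows.getD i 0) := by decide +kernel
  intro i
  induction i with
  | zero => intro _; simp [pows, val_one]
  | succ i ih =>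
    intro hi
    rw [hstep i (by omega), val_gmul hα, h2, ih (by omega), pow_succ']

theorem orderOf_root [Fintype F] (hF : Fintype.card F = 16) (hα : α ^ 4 + α + 1 = 0) :
    orderOf α = 15 := by
  have h0 : α ≠ 0 := by
    rintro rfl
    simp at hα
  have h15 : α ^ 15 = 1 := by
    have := FiniteField.pow_card_sub_one_eq_one α h0
    rwa [hF] at this
  rw [orderOf_eq_iff (by norm_num)]
  refine ⟨h15, fun m hm hm0 h => ?_⟩
  have hne : ∀ m < 15, 0 < m → pows.getD m 0 < 16 ∧ pows.getD m 0 ≠ 1 := by decide +kernel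
  obtain ⟨h1, h2⟩ := hne m hm hm0
  apply h2
  apply val_injOn hα h1 (by norm_num)
  rw [val_pows hα m hm, h, val_one]

theorem exists_pow_eq [Fintype F] (hF : Fintype.card F = 16) (hα : α ^ 4 + α + 1 = 0)
    {x : F} (hx : x ≠ 0) : ∃ i < 15, x = α ^ i := by
  obtain ⟨n, hn, rfl⟩ := exists_val hF hα x
  have hn0 : n ≠ 0 := by
    rintro rfl
    exact hx val_zero
  have key : ∀ n < 16, n ≠ 0 → ∃ i < 15, pows.getD i 0 = n := by decide +kernel
  obtain ⟨i, hi, rfl⟩ := key n hn hn0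
  exact ⟨i, hi, val_pows hα i hi⟩

/-- The Frobenius conjugates `α, α², α⁴, α⁸` of `α` are again roots of `X⁴ + X + 1`. -/
theorem root_pow (hα : α ^ 4 + α + 1 = 0) {m : ℕ} (hm : m ∈ ({1, 2, 4, 8} : Set ℕ)) :
    (α ^ m) ^ 4 + α ^ m + 1 = 0 := by
  have hsq : ∀ x : F, x ^ 4 + x + 1 = 0 → (x ^ 2) ^ 4 + x ^ 2 + 1 = 0 := by
    intro x hx
    linear_combination (x ^ 4 + x + 1) * hx - (x ^ 5 + x ^ 4 + x) * CharTwo.two_eq_zero (R := F)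
  have h2 := hsq _ hα
  have h4 := hsq _ h2
  have h8 := hsq _ h4
  simp only [Set.mem_insert_iff, Set.mem_singleton_iff] at hm
  rcases hm with rfl | rfl | rfl | rfl
  · simpa using hα
  · exact h2
  · rw [show α ^ 4 = (α ^ 2) ^ 2 by ring]; exact h4
  · rw [show α ^ 8 = ((α ^ 2) ^ 2) ^ 2 by ring]; exact h8

end Val

/-! ### Laplace expansion on codes -/

/-- `rowSum f k rows id` is the sum over the positions `i` of `rows` of the products of `f rows[i]`
and `k` of the list `rows` with position `i` deleted; the last argument puts back the rows already
passed. It is written with `List.rec` because that evaluates fast. -/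
def rowSum (f : ℕ → ℕ) (k : List ℕ → ℕ) (rows : List ℕ) : (List ℕ → List ℕ) → ℕ :=
  List.rec (fun _ => 0)
    (fun p ps ih pre => Nat.xor (gmul (f p) (k (pre ps))) (ih fun l => pre (p :: l))) rows

/-- Code of the determinant with entries coded by `A p q`, `p` in `rows` and `q` in `cols`, by
Laplace expansion along columns. Signs are absent because the characteristic is two. -/
def lap (A : ℕ → ℕ → ℕ) (cols : List ℕ) : List ℕ → ℕ :=
  List.rec (fun _ => 1) (fun q _ ih rows => rowSum (fun p => A p q) ih rows fun l => l) cols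

section Lap

variable {F : Type*} [Field F] [CharP F 2] {α : F}

theorem val_rowSum (hα : α ^ 4 + α + 1 = 0) (f : ℕ → ℕ) (k : List ℕ → ℕ) (rows : List ℕ)
    (pre : List ℕ → List ℕ) :
    val α (rowSum f k rows pre) =
      ∑ i ∈ Finset.range rows.length,
        val α (f (rows.getD i 0)) * val α (k (pre (rows.eraseIdx i))) := by
  induction rows generalizing pre with
  | nil => simp [rowSum, val_zero]
  | cons p ps ih =>
    have h : rowSum f k (p :: ps) pre =
        gmul (f p) (k (pre ps)) ^^^ rowSum f k ps (fun l => pre (p :: l)) := rfl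
    rw [h, val_xor, val_gmul hα, ih, List.length_cons, Finset.sum_range_succ']
    simp [add_comm]

theorem val_lap (hα : α ^ 4 + α + 1 = 0) (A : ℕ → ℕ → ℕ) (cols rows : List ℕ)
    (hl : rows.length = cols.length) :
    val α (lap A cols rows) = Matrix.det (Matrix.of fun i j : Fin cols.length =>
      val α (A (rows.getD i 0) (cols.getD j 0))) := by
  induction cols generalizing rows with
  | nil =>
    have h : lap A [] rows = 1 := rfl
    rw [h, val_one]
    exact (Matrix.det_fin_zero).symm
  | cons q qs ih =>
    have h : lap A (q :: qs) rows = rowSum (fun p => A p q) (lap A qs) rows fun l => l := rfl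
    rw [h, val_rowSum hα, hl]
    change _ = Matrix.det (n := Fin (qs.length + 1)) _
    rw [Matrix.det_succ_column_zero]
    simp only [List.length_cons]
    rw [Finset.sum_range]
    refine Finset.sum_congr rfl fun i _ => ?_
    have hi : (i : ℕ) < rows.length := by
      rw [hl]
      exact i.2
    rw [ih _ (by rw [List.length_eraseIdx_of_lt hi, hl]; simp), CharTwo.neg_eq, one_pow, one_mul]
    congr 2
    ext r c
    simp only [Matrix.of_apply, Matrix.submatrix_apply]
    have hrow : (rows.eraseIdx i).getD r 0 = rows.getD (i.succAbove r) 0 := by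
      simp only [List.getD_eq_getElem?_getD, List.getElem?_eraseIdx]
      by_cases hr : (r : ℕ) < i
      · rw [if_pos hr, Fin.succAbove_of_castSucc_lt _ _ (by simpa [Fin.lt_def] using hr)]
        simp
      · rw [if_neg hr, Fin.succAbove_of_le_castSucc _ _ (by simpa [Fin.le_def] using hr)]
        simp
    rw [hrow]
    simp

end Lap

/-! ### The minors of the parity-check matrix -/

/-- Entry of the partial parity-check matrix in row `p` and column `q`, counted from `0`. -/
def ent {F : Type*} [Field F] (h10 h11 h12 h20 h21 h22 : F) (p q : ℕ) : F :=
  if q / 2 = p then (if q % 2 = 0 then h12 else h22)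
  else if q / 2 = p + 1 then (if q % 2 = 0 then h11 else h21)
  else if q / 2 = p + 2 then (if q % 2 = 0 then h10 else h20)
  else 0

/-- The choices of five columns, counted from `0`, that are admissible for `(2,1,2)` codes. -/
def Adm (j0 j1 j2 j3 j4 : ℕ) : Prop :=
  (j0 < j1 ∧ j1 < j2 ∧ j2 < j3 ∧ j3 < j4) ∧ (2 ≤ j1 ∧ 4 ≤ j2 ∧ 6 ≤ j3 ∧ 8 ≤ j4) ∧
    (j0 < 6 ∧ j1 < 8 ∧ j2 < 10 ∧ j3 < 12 ∧ j4 < 14)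

instance (j0 j1 j2 j3 j4 : ℕ) : Decidable (Adm j0 j1 j2 j3 j4) := by
  unfold Adm
  infer_instance

/-- The matrix of the five chosen columns. -/
def colMat {F : Type*} [Field F] (h10 h11 h12 h20 h21 h22 : F) (j0 j1 j2 j3 j4 : ℕ) :
    Matrix (Fin 5) (Fin 5) F :=
  Matrix.of fun p i => ent h10 h11 h12 h20 h21 h22 p (![j0, j1, j2, j3, j4] i)

/-- The complete `4`-MDP minor condition, in terms of five column numbers. -/
def Good {F : Type*} [Field F] (h10 h11 h12 h20 h21 h22 : F) : Prop :=
  ∀ j0 j1 j2 j3 j4 : ℕ, Adm j0 j1 j2 j3 j4 →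
    (colMat h10 h11 h12 h20 h21 h22 j0 j1 j2 j3 j4).det ≠ 0

section Minors

variable {F : Type*} [Field F]

theorem pcm_eq (h10 h11 h12 h20 h21 h22 : F) (p : Fin 5) (q : Fin 14) :
    pcm 2 1 2 (by norm_num) (by norm_num) (Htriple h10 h11 h12 h20 h21 h22) 4 p q =
      ent h10 h11 h12 h20 h21 h22 p q := by
  fin_cases p <;> fin_cases q <;> rfl

theorem complete_iff (h10 h11 h12 h20 h21 h22 : F) :
    CompleteJMDP 2 1 2 (by norm_num) (by norm_num) (Htriple h10 h11 h12 h20 h21 h22) 4 ↔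
      Good h10 h11 h12 h20 h21 h22 := by
  constructor
  · intro h j0 j1 j2 j3 j4 ⟨⟨a1, a2, a3, a4⟩, ⟨b1, b2, b3, b4⟩, c0, c1, c2, c3, c4⟩
    let js : Fin 5 → Fin 14 := ![⟨j0, by omega⟩, ⟨j1, by omega⟩, ⟨j2, by omega⟩,
      ⟨j3, by omega⟩, ⟨j4, by omega⟩]
    have hjs : Admissible 2 1 2 4 js := by
      refine ⟨(Fin.strictMono_iff_lt_succ (n := 4) (f := js)).2 ?_, ?_⟩
      · intro i
        fin_cases i <;> simpa [js, Fin.lt_def]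
      · intro s h1 h2 _ _
        interval_cases s
        · exact ⟨b1, c0⟩
        · exact ⟨b2, c1⟩
        · exact ⟨b3, c2⟩
        · exact ⟨b4, c3⟩
    have := h js hjs
    convert this using 2
    ext p i
    refine Eq.trans ?_ (pcm_eq h10 h11 h12 h20 h21 h22 p (js i)).symm
    simp only [colMat, Matrix.of_apply]
    congr 1
    fin_cases i <;> rfl
  · intro h js hjs
    change Fin 5 → Fin 14 at js
    obtain ⟨hm, ha⟩ := hjs
    have hs : ∀ i j : Fin 5, i < j → (js i : ℕ) < js j := fun i j hij => hm hij
    have s1 := ha 1 (by norm_num) (by norm_num) (by norm_num) (by norm_num)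
    have s2 := ha 2 (by norm_num) (by norm_num) (by norm_num) (by norm_num)
    have s3 := ha 3 (by norm_num) (by norm_num) (by norm_num) (by norm_num)
    have s4 := ha 4 (by norm_num) (by norm_num) (by norm_num) (by norm_num)
    have := h (js 0) (js 1) (js 2) (js 3) (js 4)
      ⟨⟨hs 0 1 (by decide), hs 1 2 (by decide), hs 2 3 (by decide), hs 3 4 (by decide)⟩,
        ⟨s1.1, s2.1, s3.1, s4.1⟩, s1.2, s2.2, s3.2, s4.2, (js 4).2⟩
    convert this using 2
    ext p i
    refine Eq.trans (pcm_eq h10 h11 h12 h20 h21 h22 p (js i)) ?_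
    simp only [colMat, Matrix.of_apply]
    congr 1
    fin_cases i <;> rfl

/-- Rescaling `h_1`, `h_2` and the variable `z` multiplies rows and columns by nonzero factors. -/
theorem good_scale {β γ l : F} (hβ : β ≠ 0) (hγ : γ ≠ 0) (hl : l ≠ 0) (b c d : F) :
    Good (β * (l ^ 2 * b)) (β * l) β (γ * (l ^ 2 * d)) (γ * (l * c)) γ ↔ Good b 1 1 d c 1 := by
  refine forall_congr' fun j0 => forall_congr' fun j1 => forall_congr' fun j2 =>
    forall_congr' fun j3 => forall_congr' fun j4 => imp_congr_right fun _ => not_congr ?_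
  let j : Fin 5 → ℕ := ![j0, j1, j2, j3, j4]
  let v : Fin 5 → F := fun p => (l ^ (p : ℕ))⁻¹
  let w : Fin 5 → F := fun i => (if j i % 2 = 0 then β else γ) * l ^ (j i / 2)
  have hv : ∏ p, v p ≠ 0 := Finset.prod_ne_zero_iff.2 fun p _ => inv_ne_zero (pow_ne_zero _ hl)
  have hw : ∏ i, w i ≠ 0 := Finset.prod_ne_zero_iff.2 fun i _ =>
    mul_ne_zero (by split_ifs <;> assumption) (pow_ne_zero _ hl)
  have key : colMat (β * (l ^ 2 * b)) (β * l) β (γ * (l ^ 2 * d)) (γ * (l * c)) γ j0 j1 j2 j3 j4 =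
      Matrix.of fun p i => v p * (Matrix.of fun p i => w i * colMat b 1 1 d c 1 j0 j1 j2 j3 j4 p i :
        Matrix (Fin 5) (Fin 5) F) p i := by
    ext p i
    change ent _ _ _ _ _ _ _ (j i) = v p * (w i * ent _ _ _ _ _ _ _ (j i))
    have hp : l ^ (p : ℕ) ≠ 0 := pow_ne_zero _ hl
    simp only [ent, v, w]
    split_ifs <;> (try simp only [*, pow_add, mul_zero]) <;> field_simp
  rw [key, Matrix.det_mul_column, Matrix.det_mul_row]
  simp [hv, hw]

/-- The leading coefficients and `h_{1,1}` are nonzero: otherwise an admissible choice of columns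
has a zero column or a zero row. -/
theorem Good.ne_zero {h10 h11 h12 h20 h21 h22 : F} (h : Good h10 h11 h12 h20 h21 h22) :
    h12 ≠ 0 ∧ h22 ≠ 0 ∧ h11 ≠ 0 := by
  refine ⟨?_, ?_, ?_⟩
  · rintro rfl
    refine h 0 2 4 6 8 (by decide) (Matrix.det_eq_zero_of_column_eq_zero 0 fun p => ?_)
    fin_cases p <;> simp [colMat, ent]
  · rintro rfl
    refine h 1 3 5 7 9 (by decide) (Matrix.det_eq_zero_of_column_eq_zero 0 fun p => ?_)
    fin_cases p <;> simp [colMat, ent]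
  · rintro rfl
    refine h 0 2 4 6 10 (by decide) (Matrix.det_eq_zero_of_row_eq_zero 4 fun i => ?_)
    fin_cases i <;> simp [colMat, ent]

end Minors

/-! ### Evaluation of the normalized minors -/

/-- Code of the entry in row `p` and column `q` of the parity-check matrix for
`h_1 = b + z + z²` and `h_2 = d + c z + z²`. -/
def entry (b c d p q : ℕ) : ℕ :=
  bif Nat.beq (Nat.div q 2) p then 1
  else bif Nat.beq (Nat.div q 2) (Nat.add p 1) then bif Nat.beq (Nat.mod q 2) 0 then 1 else c
  else bif Nat.beq (Nat.div q 2) (Nat.add p 2) then bif Nat.beq (Nat.mod q 2) 0 then b else d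
  else 0

/-- Code of the minor for `h_1 = b + z + z²` and `h_2 = d + c z + z²` in the given columns. -/
def minor (b c d : ℕ) (js : List ℕ) : ℕ :=
  lap (entry b c d) js [0, 1, 2, 3, 4]

theorem val_minor {F : Type*} [Field F] [CharP F 2] {α : F} (hα : α ^ 4 + α + 1 = 0)
    (b c d j0 j1 j2 j3 j4 : ℕ) :
    val α (minor b c d [j0, j1, j2, j3, j4]) =
      (colMat (val α b) 1 1 (val α d) (val α c) 1 j0 j1 j2 j3 j4).det := by
  have he : ∀ p q, val α (entry b c d p q) = ent (val α b) 1 1 (val α d) (val α c) 1 p q := by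
    intro p q
    have hb : ∀ (x y : ℕ) (s t : ℕ), val α (bif Nat.beq x y then s else t) =
        if x = y then val α s else val α t := by
      intro x y s t
      by_cases hxy : x = y
      · simp [hxy]
      · have : Nat.beq x y = false := by
          cases hh : Nat.beq x y
          · rfl
          · exact absurd (Nat.eq_of_beq_eq_true hh) hxy
        simp [hxy, this]
    simp only [entry, ent, hb, val_one, val_zero]
    simp only [ite_self]
    rfl
  rw [minor, val_lap hα (entry b c d) [j0, j1, j2, j3, j4] [0, 1, 2, 3, 4] rfl]
  change Matrix.det (n := Fin 5) _ = _
  congr 1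
  ext p i
  simp only [Matrix.of_apply, he, colMat]
  fin_cases p <;> fin_cases i <;> rfl

/-- Nonvanishing of all admissible minors, as a Boolean computation. -/
def checkAll (b c d : ℕ) : Bool :=
  [0, 1, 2, 3, 4, 5].all fun j0 => [2, 3, 4, 5, 6, 7].all fun j1 =>
    !Nat.blt j0 j1 || [4, 5, 6, 7, 8, 9].all fun j2 =>
    !Nat.blt j1 j2 || [6, 7, 8, 9, 10, 11].all fun j3 =>
    !Nat.blt j2 j3 || [8, 9, 10, 11, 12, 13].all fun j4 =>
    !Nat.blt j3 j4 || !Nat.beq (minor b c d [j0, j1, j2, j3, j4] % 16) 0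

theorem checkAll_four : checkAll 4 8 4 = true := by decide +kernel

theorem checkAll_nine : checkAll 9 8 9 = true := by decide +kernel

theorem good_of_checkAll {F : Type*} [Field F] [CharP F 2] {α : F} (hα : α ^ 4 + α + 1 = 0)
    {b c d : ℕ} (h : checkAll b c d = true) : Good (val α b) 1 1 (val α d) (val α c) 1 := by
  intro j0 j1 j2 j3 j4 ⟨⟨a1, a2, a3, a4⟩, ⟨b1, b2, b3, b4⟩, c0, c1, c2, c3, c4⟩
  rw [← val_minor hα, ← val_mod]
  refine val_ne_zero hα (Nat.mod_lt _ (by norm_num)) ?_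
  have hlt : ∀ x y : ℕ, x < y → Nat.blt x y = true := fun x y hxy => by
    simpa [Nat.blt] using hxy
  have m0 : j0 ∈ [0, 1, 2, 3, 4, 5] := by interval_cases j0 <;> simp
  have m1 : j1 ∈ [2, 3, 4, 5, 6, 7] := by interval_cases j1 <;> simp
  have m2 : j2 ∈ [4, 5, 6, 7, 8, 9] := by interval_cases j2 <;> simp
  have m3 : j3 ∈ [6, 7, 8, 9, 10, 11] := by interval_cases j3 <;> simp
  have m4 : j4 ∈ [8, 9, 10, 11, 12, 13] := by interval_cases j4 <;> simp
  have h1 := List.all_eq_true.1 (List.all_eq_true.1 h _ m0) _ m1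
  rw [hlt _ _ a1, Bool.not_true, Bool.false_or] at h1
  have h2 := List.all_eq_true.1 h1 _ m2
  rw [hlt _ _ a2, Bool.not_true, Bool.false_or] at h2
  have h3 := List.all_eq_true.1 h2 _ m3
  rw [hlt _ _ a3, Bool.not_true, Bool.false_or] at h3
  have h4 := List.all_eq_true.1 h3 _ m4
  rw [hlt _ _ a4, Bool.not_true, Bool.false_or] at h4
  intro h0
  rw [h0] at h4
  exact absurd h4 (by decide)

/-- Admissible choices of columns whose minors suffice to exclude the other candidates. -/
def testMinors : List (List ℕ) :=
  [[0, 2, 6, 8, 12], [0, 4, 6, 8, 10], [0, 4, 5, 9, 13], [0, 4, 7, 10, 11],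
   [0, 2, 4, 9, 10], [0, 2, 4, 9, 11], [0, 5, 7, 9, 11], [0, 2, 6, 8, 9],
   [0, 2, 6, 9, 10], [0, 2, 7, 8, 9], [0, 2, 6, 8, 11], [0, 2, 7, 9, 10],
   [0, 2, 6, 9, 11], [0, 2, 7, 8, 10], [0, 2, 8, 9, 10], [0, 2, 8, 9, 11],
   [0, 4, 7, 8, 9], [0, 4, 7, 9, 10], [0, 5, 6, 8, 11], [0, 4, 7, 8, 11],
   [0, 4, 7, 9, 11], [0, 6, 7, 8, 11], [0, 4, 6, 8, 11], [0, 4, 6, 9, 10],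
   [0, 4, 6, 9, 11], [0, 5, 6, 8, 10], [0, 5, 6, 9, 10], [0, 5, 6, 9, 11],
   [0, 5, 7, 8, 10], [0, 5, 7, 9, 10], [0, 4, 7, 8, 10], [2, 4, 7, 8, 10],
   [2, 4, 7, 8, 9], [2, 4, 7, 9, 10], [2, 5, 6, 8, 9], [0, 4, 6, 8, 9],
   [2, 5, 7, 8, 9], [3, 4, 6, 8, 10], [3, 4, 6, 9, 11]]

/-- For `b` running over codes of representatives of the Frobenius orbits, each pair `(c, d)` other
than `(8, 4)` for `b = 4` and `(8, 9)` for `b = 9` makes one of the test minors vanish. -/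
def checkTests : Bool :=
  [0, 1, 4, 8, 6, 9].all fun b =>
    [0, 1, 2, 3, 4, 5, 6, 7, 8, 9, 10, 11, 12, 13, 14, 15].all fun c =>
    [0, 1, 2, 3, 4, 5, 6, 7, 8, 9, 10, 11, 12, 13, 14, 15].all fun d =>
    testMinors.any (fun js => Nat.beq (minor b c d js) 0) ||
      (Nat.beq c 8 && Nat.beq d b && (Nat.beq b 4 || Nat.beq b 9))

theorem checkTests_eq : checkTests = true := by decide +kernel

theorem Good.codes {F : Type*} [Field F] [CharP F 2] {α : F} (hα : α ^ 4 + α + 1 = 0)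
    {b c d : ℕ} (hb : b ∈ [0, 1, 4, 8, 6, 9]) (hc : c < 16) (hd : d < 16)
    (h : Good (val α b) 1 1 (val α d) (val α c) 1) : c = 8 ∧ d = b ∧ (b = 4 ∨ b = 9) := by
  have m : ∀ n < 16, n ∈ [0, 1, 2, 3, 4, 5, 6, 7, 8, 9, 10, 11, 12, 13, 14, 15] := by decide
  have hk := List.all_eq_true.1 (List.all_eq_true.1 (List.all_eq_true.1 checkTests_eq
    _ hb) _ (m c hc)) _ (m d hd)
  rw [Bool.or_eq_true] at hk
  rcases hk with hk | hk
  · obtain ⟨js, hjs, h0⟩ := List.any_eq_true.1 hk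
    have hadm : ∀ js ∈ testMinors,
        js = [js.getD 0 0, js.getD 1 0, js.getD 2 0, js.getD 3 0, js.getD 4 0] ∧
        Adm (js.getD 0 0) (js.getD 1 0) (js.getD 2 0) (js.getD 3 0) (js.getD 4 0) := by
      decide +kernel
    obtain ⟨e, ha⟩ := hadm js hjs
    refine absurd ?_ (h _ _ _ _ _ ha)
    rw [← val_minor hα, ← e, Nat.eq_of_beq_eq_true h0, val_zero]
  · rw [Bool.and_eq_true, Bool.and_eq_true, Bool.or_eq_true] at hk
    obtain ⟨⟨h1, h2⟩, h3⟩ := hk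
    exact ⟨Nat.eq_of_beq_eq_true h1, Nat.eq_of_beq_eq_true h2,
      h3.imp Nat.eq_of_beq_eq_true Nat.eq_of_beq_eq_true⟩

/-! ### Classification -/

section Classification

variable {F : Type*} [Field F]

theorem charP_two_of_card [Fintype F] (hF : Fintype.card F = 16) : CharP F 2 := by
  have h16 : ((16 : ℕ) : F) = 0 := by
    rw [← hF]
    exact FiniteField.cast_card_eq_zero F
  have h2 : (2 : F) = 0 := by
    have h : (2 : F) ^ 4 = 0 := by
      rw [← h16]
      norm_num
    exact pow_eq_zero_iff (by norm_num) |>.1 h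
  exact CharTwo.of_one_ne_zero_of_two_eq_zero one_ne_zero h2

theorem pow_ne {α : F} (hα : α ^ 4 + α + 1 = 0) (i : ℕ) : α ^ i ≠ 0 := by
  refine pow_ne_zero _ ?_
  rintro rfl
  simp at hα

/-- Equal constant terms (after normalization) make `z` a combination of `h_1` and `h_2`, and
`h_1` is a nonzero constant modulo `z`. -/
theorem coprime_hpoly {β γ l b c : F} (hβ : β ≠ 0) (hγ : γ ≠ 0) (hl : l ≠ 0) (hb : b ≠ 0)
    (hc : c ≠ 1) :
    IsCoprime (hpoly (β * (l ^ 2 * b)) (β * l) β) (hpoly (γ * (l ^ 2 * b)) (γ * (l * c)) γ) := by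
  have e1 : (C β⁻¹ : F[X]) * C β = 1 := by rw [← C_mul, inv_mul_cancel₀ hβ, C_1]
  have e2 : (C γ⁻¹ : F[X]) * C γ = 1 := by rw [← C_mul, inv_mul_cancel₀ hγ, C_1]
  have e3 : (C (l ^ 2 * b)⁻¹ : F[X]) * (C l ^ 2 * C b) = 1 := by
    rw [← C_pow, ← C_mul, ← C_mul,
      inv_mul_cancel₀ (mul_ne_zero (pow_ne_zero 2 hl) hb), C_1]
  have e4 : (C (l * (1 - c))⁻¹ : F[X]) * (C l * (1 - C c)) = 1 := by
    rw [← C_1, ← C_sub, ← C_mul, ← C_mul,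
      inv_mul_cancel₀ (mul_ne_zero hl (sub_ne_zero.2 hc.symm))]
  generalize (C (l ^ 2 * b)⁻¹ : F[X]) = k1 at e3
  generalize (C (l * (1 - c))⁻¹ : F[X]) = k2 at e4
  refine ⟨k1 * C β⁻¹ * (1 - (X + C l) * k2), k1 * C γ⁻¹ * k2 * (X + C l), ?_⟩
  simp only [hpoly, C_mul, C_pow]
  linear_combination k1 * (1 - (X + C l) * k2) * (C l ^ 2 * C b + C l * X + X ^ 2) * e1 +
    k1 * k2 * (X + C l) * (C l ^ 2 * C b + C l * C c * X + X ^ 2) * e2 -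
    k1 * (X + C l) * X * e4 + e3

variable [Fintype F] {α : F}

theorem pow_eq_iff (hF : Fintype.card F = 16) (hα : α ^ 4 + α + 1 = 0) (i j : ℕ) :
    α ^ i = α ^ j ↔ i % 15 = j % 15 := by
  have := charP_two_of_card hF
  have ho := orderOf_root hF hα
  have hfin : IsOfFinOrder α := orderOf_pos_iff.1 (by omega)
  rw [hfin.pow_inj_mod, ho]

/-- Every element has one of the codes `0, 1, 4, 8, 6, 9` for one of the four conjugates of `α`,
because the exponents `0, 2, 3, 5, 14` represent the orbits of doubling modulo `15`. -/
theorem exists_orbit_rep (hF : Fintype.card F = 16) (hα : α ^ 4 + α + 1 = 0) (x : F) :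
    ∃ m ∈ ({1, 2, 4, 8} : Set ℕ), ∃ n ∈ [0, 1, 4, 8, 6, 9], x = val (α ^ m) n := by
  have := charP_two_of_card hF
  by_cases hx : x = 0
  · exact ⟨1, by simp, 0, by simp, by rw [hx, val_zero]⟩
  obtain ⟨i, hi, rfl⟩ := exists_pow_eq hF hα hx
  have key : ∀ i < 15, ∃ m ∈ [1, 2, 4, 8], ∃ r < 15,
      pows.getD r 0 ∈ [0, 1, 4, 8, 6, 9] ∧ i % 15 = (m * r) % 15 := by decide +kernel
  obtain ⟨m, hm, r, hr, hn, he⟩ := key i hi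
  have hm' : m ∈ ({1, 2, 4, 8} : Set ℕ) := by simpa using hm
  refine ⟨m, hm', _, hn, ?_⟩
  rw [val_pows (root_pow hα hm') r hr, ← pow_mul]
  exact (pow_eq_iff hF hα _ _).2 he

/-- Classification for `h_1 = b + z + z²` and `h_2 = d + c z + z²`. -/
theorem good_normalized_iff (hF : Fintype.card F = 16) (hα : α ^ 4 + α + 1 = 0) (b c d : F) :
    Good b 1 1 d c 1 ↔ ∃ m ∈ ({1, 2, 4, 8} : Set ℕ), c = α ^ (3 * m) ∧ d = b ∧
      (b = α ^ (2 * m) ∨ b = α ^ (14 * m)) := by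
  have := charP_two_of_card hF
  have hval : ∀ m ∈ ({1, 2, 4, 8} : Set ℕ), val (α ^ m) 8 = α ^ (3 * m) ∧
      val (α ^ m) 4 = α ^ (2 * m) ∧ val (α ^ m) 9 = α ^ (14 * m) := by
    intro m hm
    have hr := root_pow hα hm
    refine ⟨?_, ?_, ?_⟩
    · rw [mul_comm, pow_mul, ← val_pows hr 3 (by norm_num)]; rfl
    · rw [mul_comm, pow_mul, ← val_pows hr 2 (by norm_num)]; rfl
    · rw [mul_comm, pow_mul, ← val_pows hr 14 (by norm_num)]; rfl
  constructor
  · intro h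
    obtain ⟨m, hm, n, hn, rfl⟩ := exists_orbit_rep hF hα b
    have hr := root_pow hα hm
    obtain ⟨c, hc, rfl⟩ := exists_val hF hr c
    obtain ⟨d, hd, rfl⟩ := exists_val hF hr d
    obtain ⟨rfl, rfl, h49⟩ := h.codes hr hn hc hd
    refine ⟨m, hm, (hval m hm).1, rfl, ?_⟩
    rcases h49 with rfl | rfl
    · exact Or.inl (hval m hm).2.1
    · exact Or.inr (hval m hm).2.2
  · rintro ⟨m, hm, rfl, rfl, rfl | rfl⟩
    · rw [← (hval m hm).1, ← (hval m hm).2.1]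
      exact good_of_checkAll (root_pow hα hm) checkAll_four
    · rw [← (hval m hm).1, ← (hval m hm).2.2]
      exact good_of_checkAll (root_pow hα hm) checkAll_nine

theorem is212_iff (hF : Fintype.card F = 16) (hα : α ^ 4 + α + 1 = 0)
    (h10 h11 h12 h20 h21 h22 : F) :
    Is212 4 h10 h11 h12 h20 h21 h22 ↔
      ∃ (β γ : F) (i1 m e : ℕ), β ≠ 0 ∧ γ ≠ 0 ∧ i1 ≤ 14 ∧
        m ∈ ({1, 2, 4, 8} : Set ℕ) ∧ e ≤ 1 ∧
        h12 = β ∧ h22 = γ ∧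
        h11 = β * α ^ i1 ∧ h21 = γ * α ^ ((i1 + 3 * m) % 15) ∧
        h10 = β * α ^ ((i1 + (i1 + 3 * m) % 15 + 45 - 4 ^ e * m) % 15) ∧
        h20 = γ * α ^ ((i1 + (i1 + 3 * m) % 15 + 45 - 4 ^ e * m) % 15) := by
  have hpow := pow_eq_iff hF hα
  have := charP_two_of_card hF
  have hc : ∀ i m : ℕ, α ^ ((i + 3 * m) % 15) = α ^ i * α ^ (3 * m) := by
    intro i m
    rw [← pow_add]
    exact (hpow _ _).2 (by omega)
  -- `2 m = 3 m - 4 ^ 0 m` and `14 m ≡ 3 m - 4 ^ 1 m` modulo `15`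
  have hb : ∀ i m : ℕ, m ∈ ({1, 2, 4, 8} : Set ℕ) →
      α ^ ((i + (i + 3 * m) % 15 + 45 - 4 ^ 0 * m) % 15) = (α ^ i) ^ 2 * α ^ (2 * m) ∧
      α ^ ((i + (i + 3 * m) % 15 + 45 - 4 ^ 1 * m) % 15) = (α ^ i) ^ 2 * α ^ (14 * m) := by
    intro i m hm
    have hm8 : m ≤ 8 := by
      simp only [Set.mem_insert_iff, Set.mem_singleton_iff] at hm
      omega
    rw [← pow_mul, ← pow_add, ← pow_add]
    exact ⟨(hpow _ _).2 (by omega), (hpow _ _).2 (by omega)⟩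
  constructor
  · rintro ⟨-, hcomp⟩
    rw [complete_iff] at hcomp
    obtain ⟨n12, n22, n11⟩ := hcomp.ne_zero
    have hl : h11 / h12 ≠ 0 := div_ne_zero n11 n12
    obtain ⟨i, hi, hil⟩ := exists_pow_eq hF hα hl
    have hli : α ^ i ≠ 0 := pow_ne hα i
    have x11 : h11 = h12 * α ^ i := by
      rw [← hil]
      field_simp
    have x10 : h10 = h12 * ((α ^ i) ^ 2 * (h10 / (h12 * (α ^ i) ^ 2))) := by field_simp
    have x20 : h20 = h22 * ((α ^ i) ^ 2 * (h20 / (h22 * (α ^ i) ^ 2))) := by field_simp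
    have x21 : h21 = h22 * (α ^ i * (h21 / (h22 * α ^ i))) := by field_simp
    generalize h10 / (h12 * (α ^ i) ^ 2) = b at x10
    generalize h20 / (h22 * (α ^ i) ^ 2) = d at x20
    generalize h21 / (h22 * α ^ i) = c at x21
    rw [x11, x10, x20, x21, good_scale n12 n22 hli, good_normalized_iff hF hα] at hcomp
    obtain ⟨m, hm, rfl, rfl, rfl | rfl⟩ := hcomp
    · exact ⟨h12, h22, i, m, 0, n12, n22, by omega, hm, by norm_num, rfl, rfl, x11,
        by rw [hc, x21], by rw [(hb i m hm).1, x10], by rw [(hb i m hm).1, x20]⟩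
    · exact ⟨h12, h22, i, m, 1, n12, n22, by omega, hm, by norm_num, rfl, rfl, x11,
        by rw [hc, x21], by rw [(hb i m hm).2, x10], by rw [(hb i m hm).2, x20]⟩
  · rintro ⟨β, γ, i, m, e, hβ, hγ, hi, hm, he, rfl, rfl, rfl, rfl, rfl, rfl⟩
    have hc1 : α ^ (3 * m) ≠ 1 := by
      intro h
      rw [← pow_zero α, hpow] at h
      simp only [Set.mem_insert_iff, Set.mem_singleton_iff] at hm
      omega
    obtain ⟨b, hb0, hbe, hbm⟩ : ∃ b : F, b ≠ 0 ∧
        α ^ ((i + (i + 3 * m) % 15 + 45 - 4 ^ e * m) % 15) = (α ^ i) ^ 2 * b ∧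
        (b = α ^ (2 * m) ∨ b = α ^ (14 * m)) := by
      interval_cases e
      · exact ⟨_, pow_ne hα _, (hb i m hm).1, Or.inl rfl⟩
      · exact ⟨_, pow_ne hα _, (hb i m hm).2, Or.inr rfl⟩
    rw [hc, hbe]
    refine ⟨coprime_hpoly hβ hγ (pow_ne hα i) hb0 hc1, ?_⟩
    rw [complete_iff, good_scale hβ hγ (pow_ne hα i), good_normalized_iff hF hα]
    exact ⟨m, hm, rfl, rfl, hbm⟩

/-- The parameters `(β, γ, i_1, m, e)` are determined by the code: `h_{1,1}/h_{1,2}` gives `i_1`,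
then `h_{2,1}/h_{2,2}` gives `m` and `h_{1,0}/h_{1,2}` gives `e`. -/
theorem params_unique : ∀ i < 15, ∀ m ∈ [1, 2, 4, 8], ∀ e < 2, ∀ m' ∈ [1, 2, 4, 8], ∀ e' < 2,
    (i + 3 * m) % 15 = (i + 3 * m') % 15 →
    (i + (i + 3 * m) % 15 + 45 - 4 ^ e * m) % 15 =
      (i + (i + 3 * m') % 15 + 45 - 4 ^ e' * m') % 15 → m = m' ∧ e = e' := by
  decide +kernel

theorem card_codes (hF : Fintype.card F = 16) (hα : α ^ 4 + α + 1 = 0) :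
    Nat.card {x : F × F × F × F × F × F //
      x.1 ≠ 0 ∧ x.2.1 ≠ 0 ∧ x.2.2.1 ≠ 0 ∧ x.2.2.2.1 ≠ 0 ∧ x.2.2.2.2.1 ≠ 0 ∧
      x.2.2.2.2.2 ≠ 0 ∧
      Is212 4 x.1 x.2.1 x.2.2.1 x.2.2.2.1 x.2.2.2.2.1 x.2.2.2.2.2} = 27000 := by
  have hpow := pow_eq_iff hF hα
  have hm4 : ∀ k : Fin 4, 2 ^ (k : ℕ) ∈ [1, 2, 4, 8] := by decide
  let i3 : ℕ → ℕ → ℕ → ℕ := fun i m e => (i + (i + 3 * m) % 15 + 45 - 4 ^ e * m) % 15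
  let f : Fˣ × Fˣ × Fin 15 × Fin 4 × Fin 2 → {x : F × F × F × F × F × F //
      x.1 ≠ 0 ∧ x.2.1 ≠ 0 ∧ x.2.2.1 ≠ 0 ∧ x.2.2.2.1 ≠ 0 ∧ x.2.2.2.2.1 ≠ 0 ∧
      x.2.2.2.2.2 ≠ 0 ∧
      Is212 4 x.1 x.2.1 x.2.2.1 x.2.2.2.1 x.2.2.2.2.1 x.2.2.2.2.2} :=
    fun ⟨β, γ, i, k, e⟩ =>
      ⟨(β * α ^ i3 i (2 ^ (k : ℕ)) e, β * α ^ (i : ℕ), β,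
        γ * α ^ i3 i (2 ^ (k : ℕ)) e, γ * α ^ (((i : ℕ) + 3 * 2 ^ (k : ℕ)) % 15), γ),
        mul_ne_zero β.ne_zero (pow_ne hα _), mul_ne_zero β.ne_zero (pow_ne hα _), β.ne_zero,
        mul_ne_zero γ.ne_zero (pow_ne hα _), mul_ne_zero γ.ne_zero (pow_ne hα _), γ.ne_zero,
        (is212_iff hF hα _ _ _ _ _ _).2 ⟨β, γ, i, 2 ^ (k : ℕ), e, β.ne_zero, γ.ne_zero,
          by omega, by simpa using hm4 k, by omega, rfl, rfl, rfl, rfl, rfl, rfl⟩⟩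
  have hf : Function.Bijective f := by
    constructor
    · rintro ⟨β, γ, i, k, e⟩ ⟨β', γ', i', k', e'⟩ h
      have h := congrArg Subtype.val h
      simp only [f, Prod.mk.injEq] at h
      obtain ⟨h10, h11, h12, -, h21, h22⟩ := h
      obtain rfl := Units.ext h12
      obtain rfl := Units.ext h22
      have h11 := (hpow _ _).1 (mul_left_cancel₀ β.ne_zero h11)
      have h21 := (hpow _ _).1 (mul_left_cancel₀ γ.ne_zero h21)
      have h10 := (hpow _ _).1 (mul_left_cancel₀ β.ne_zero h10)
      obtain rfl : i = i' := by omega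
      simp only [i3, Nat.mod_mod] at h10 h21
      obtain ⟨hk, he⟩ := params_unique i i.2 _ (hm4 k) e e.2 _ (hm4 k') e' e'.2 h21 h10
      obtain rfl := Fin.ext (Nat.pow_right_injective le_rfl hk)
      obtain rfl := Fin.ext he
      rfl
    · rintro ⟨⟨h10, h11, h12, h20, h21, h22⟩, hx⟩
      obtain ⟨-, -, -, -, -, -, hx⟩ := id hx
      obtain ⟨β, γ, i, m, e, hβ, hγ, hi, hm, he, e1, e2, e3, e4, e5, e6⟩ :=
        (is212_iff hF hα _ _ _ _ _ _).1 hx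
      obtain ⟨k, rfl⟩ : ∃ k : Fin 4, m = 2 ^ (k : ℕ) := by
        simp only [Set.mem_insert_iff, Set.mem_singleton_iff] at hm
        rcases hm with rfl | rfl | rfl | rfl
        exacts [⟨0, rfl⟩, ⟨1, rfl⟩, ⟨2, rfl⟩, ⟨3, rfl⟩]
      refine ⟨(Units.mk0 β hβ, Units.mk0 γ hγ, ⟨i, by omega⟩, k, ⟨e, by omega⟩), ?_⟩
      apply Subtype.ext
      simp only at e1 e2 e3 e4 e5 e6
      simp only [f, i3, Units.val_mk0, e1, e2, e3, e4, e5, e6]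
  rw [← Nat.card_eq_of_bijective f hf]
  have hu : Nat.card Fˣ = 15 := by
    rw [Nat.card_units, Nat.card_eq_fintype_card, hF]
  simp [Nat.card_prod, hu]

end Classification

/-- Let `F_16 = F_2[X]/(X⁴+X+1)` with `α` the (primitive) class of `X`.
A triple `(H_2, H_1, H_0)` defines a `(2,1,2)` complete MDP (= complete `4`-MDP)
convolutional code if and only if `H_2 = [β, γ]`, `H_1 = [βα^{i_1}, γα^{i_2}]`,
`H_0 = [βα^{i_3}, γα^{i_3}]` with `β, γ ≠ 0`, `i_1 ∈ {0,…,14}`, `k ∈ {1,2,4,8}`,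
`j ∈ {0,1}`, `i_2 ≡ i_1 + 3k (mod 15)` and `i_3 ≡ i_1 + i_2 - 4^j k (mod 15)`.
Consequently there are exactly `15² · 120 = 27000` such triples (with all six entries
nonzero). -/
theorem stmt17 (F : Type*) [Field F] [Fintype F] (hF : Fintype.card F = 16)
    (α : F) (hα : α ^ 4 + α + 1 = 0) :
    (∀ h10 h11 h12 h20 h21 h22 : F,
      Is212 4 h10 h11 h12 h20 h21 h22 ↔
        ∃ (β γ : F) (i1 m e : ℕ), β ≠ 0 ∧ γ ≠ 0 ∧ i1 ≤ 14 ∧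
          m ∈ ({1, 2, 4, 8} : Set ℕ) ∧ e ≤ 1 ∧
          h12 = β ∧ h22 = γ ∧
          h11 = β * α ^ i1 ∧ h21 = γ * α ^ ((i1 + 3 * m) % 15) ∧
          h10 = β * α ^ ((i1 + (i1 + 3 * m) % 15 + 45 - 4 ^ e * m) % 15) ∧
          h20 = γ * α ^ ((i1 + (i1 + 3 * m) % 15 + 45 - 4 ^ e * m) % 15)) ∧
    Nat.card {x : F × F × F × F × F × F //
      x.1 ≠ 0 ∧ x.2.1 ≠ 0 ∧ x.2.2.1 ≠ 0 ∧ x.2.2.2.1 ≠ 0 ∧ x.2.2.2.2.1 ≠ 0 ∧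
      x.2.2.2.2.2 ≠ 0 ∧
      Is212 4 x.1 x.2.1 x.2.2.1 x.2.2.2.1 x.2.2.2.2.1 x.2.2.2.2.2} = 27000 := by
  exact ⟨is212_iff hF hα, card_codes hF hα⟩
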